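/- Let M = (Q, A, τ) be a reversible Mealy automaton and let P_M be the automaton semigroup generated by M. Then P_M contains a free subsemigroup of rank two if and only if P_M contains an element of infinite order. -/

import Mathlib

/-!
If `y, z` is a free pair, the powers of `y` are pairwise distinct. The converse is the content of
this file.

Suppose `x ∈ P_M` has infinite order. Passing to a power of the automaton (`Mealy.pow`, whose
states are the words of states of the length of a representative of `x`), `x` becomes a state `q`
of a reversible automaton. Its orbit language `orb q`, the set of all words `q ^ n @ u`, is closed
under taking factors. By reversibility every word of letters permutes the words of states of a
given length, and inverses of these permutations also come from words of letters, so the action on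
each level of `orb q` is transitive (`Mealy.orb_transitive`). Anything defined equivariantly from a
word of `orb q` therefore has a size that depends only on the length of the word, and this is used
twice to turn monotonicity into eventual stability.

* The letters that extend a word on the left inside `orb q` decrease when the word grows on the
  right, so beyond some length `N` they depend only on the first `N` letters
  (`Mealy.exists_stable`).
* Call two words of states equivalent if they have the same length, the same action and the same
  left extensions in `orb q`. The pivot set of a factored word `s r` is the set of letters `p` for
  which some `s' p r` is equivalent to `s r`. It increases when `s` grows on the left or `r` on
  the right, so for long `s` and `r` it does not change any more
  (`Mealy.exists_pivots_stable`).

If a stable pivot set consists of all the letters that may precede `r`, then words of `orb q` can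
be rewritten, up to equivalence, so that all but boundedly many letters lie in a power of `q`. Each
level of `orb q` then induces boundedly many transformations, the powers of `q` are realised by
states of automata of bounded size, and `q` has finite order (`Mealy.finite_of_full_pivots`).

Otherwise there are words `u r` and `v r` in `orb q` with distinct stable pivot sets. With `r`
chosen recurrent, they are completed to `U = r x₁ u` and `V = r x₂ v` such that every product of
copies of `U` and `V`, followed by `r`, lies in `orb q` and has the left extensions of `r`. Suppose
two such products act equally. They have equal length, since otherwise long words of `orb q` could
be shortened and `q` would have finite order (`Mealy.length_eq_of_sameAct`); so neither is a proper
suffix of the other, and, followed by `r`, they are equivalent. If they are distinct, compare them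
at the rightmost factor in which they differ: there the pivot sets are those of `u r` and of
`v r`, whereas equivalent words have equal pivot sets. Hence `U` and `V` generate a free
subsemigroup (`Mealy.exists_free_words`).
-/

namespace AutGrp

/-- A Mealy automaton with state set `Q` and alphabet `A`:
`step q a = (q · a, q @ a)` (output letter, next state). -/
structure Mealy (Q A : Type*) where
  step : Q → A → A × Q

namespace Mealy

variable {Q A : Type*}

/-- The output letter `q · a`. -/
def o (M : Mealy Q A) (q : Q) (a : A) : A := (M.step q a).1

/-- The next state `q @ a`. -/
def t (M : Mealy Q A) (q : Q) (a : A) : Q := (M.step q a).2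

/-- Action of a single state on a word of letters: `q · w`. -/
def actA (M : Mealy Q A) : Q → List A → List A
  | _, [] => []
  | q, a :: w => M.o q a :: M.actA (M.t q a) w

/-- State reached from `q` after reading the word `w`: `q @ w`. -/
def stA (M : Mealy Q A) : Q → List A → Q
  | q, [] => q
  | q, a :: w => M.stA (M.t q a) w

/-- Action of a word of states on a word of letters: `s · u` (rightmost state acts first). -/
def actW (M : Mealy Q A) : List Q → List A → List A
  | [], u => u
  | q :: s, u => M.actA q (M.actW s u)

/-- Word of states reached after reading `u`: `s @ u`. -/
def stW (M : Mealy Q A) : List Q → List A → List Q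
  | [], _ => []
  | q :: s, u => M.stA q (M.actW s u) :: M.stW s u

/-- `M` is invertible if each state acts on `A` by a bijection. -/
def Invertible (M : Mealy Q A) : Prop := ∀ q : Q, Function.Bijective (M.o q)

/-- `M` is reversible if each letter acts on `Q` by a bijection. -/
def Reversible (M : Mealy Q A) : Prop := ∀ a : A, Function.Bijective (fun q => M.t q a)

theorem actA_append (M : Mealy Q A) (q : Q) (x y : List A) :
    M.actA q (x ++ y) = M.actA q x ++ M.actA (M.stA q x) y := by
  induction x generalizing q with
  | nil => simp [actA, stA]
  | cons a w ih => simp [actA, stA, ih]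

theorem stA_append (M : Mealy Q A) (q : Q) (x y : List A) :
    M.stA q (x ++ y) = M.stA (M.stA q x) y := by
  induction x generalizing q with
  | nil => simp [stA]
  | cons a w ih => simp [stA, ih]

theorem actW_append_states (M : Mealy Q A) (s u : List Q) (w : List A) :
    M.actW (s ++ u) w = M.actW s (M.actW u w) := by
  induction s with
  | nil => simp [actW]
  | cons q s ih => simp [actW, ih]

theorem actW_append (M : Mealy Q A) (s : List Q) (x y : List A) :
    M.actW s (x ++ y) = M.actW s x ++ M.actW (M.stW s x) y := by
  induction s with
  | nil => simp [actW, stW]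
  | cons q s ih => simp [actW, stW, ih, actA_append]

theorem stW_append (M : Mealy Q A) (s : List Q) (x y : List A) :
    M.stW s (x ++ y) = M.stW (M.stW s x) y := by
  induction s with
  | nil => simp [stW]
  | cons q s ih => simp [stW, actW, ih, actW_append, stA_append]

theorem actW_stW_congr (M : Mealy Q A) {p p' : List Q}
    (h : ∀ w : List A, M.actW p w = M.actW p' w) (u w : List A) :
    M.actW (M.stW p u) w = M.actW (M.stW p' u) w := by
  have h1 := M.actW_append p u w
  have h2 := M.actW_append p' u w
  rw [h u, h (u ++ w)] at h1
  rw [h1] at h2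
  exact List.append_cancel_left h2

/-- The congruence `~Q` on the free monoid `Q*`: two words of states are equivalent
iff they act identically on `A*`. -/
def conQ (M : Mealy Q A) : Con (FreeMonoid Q) where
  r s u := ∀ w : List A, M.actW s.toList w = M.actW u.toList w
  iseqv := ⟨fun _ _ => rfl, fun h w => (h w).symm, fun h1 h2 w => (h1 w).trans (h2 w)⟩
  mul' := by
    intro a b c d h1 h2 w
    simp only [FreeMonoid.toList_mul, actW_append_states]
    rw [h2 w, h1 (M.actW d.toList w)]

/-- The congruence `~A` on the free monoid `A*`: `u ~A v` iff `s @ u = s @ v` for all `s ∈ Q*`. -/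
def conA (M : Mealy Q A) : Con (FreeMonoid A) where
  r u v := ∀ s : List Q, M.stW s u.toList = M.stW s v.toList
  iseqv := ⟨fun _ _ => rfl, fun h s => (h s).symm, fun h1 h2 s => (h1 s).trans (h2 s)⟩
  mul' := by
    intro a b c d h1 h2 s
    simp only [FreeMonoid.toList_mul, stW_append]
    rw [h1 s, h2 (M.stW s b.toList)]

/-- The congruence `~D` on the free monoid `A*`: `u ~D v` iff `s @ u ~Q s @ v` for all `s ∈ Q*`. -/
def conD (M : Mealy Q A) : Con (FreeMonoid A) where
  r u v := ∀ (s : List Q) (w : List A),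
    M.actW (M.stW s u.toList) w = M.actW (M.stW s v.toList) w
  iseqv := ⟨fun _ _ _ => rfl, fun h s w => (h s w).symm,
    fun h1 h2 s w => (h1 s w).trans (h2 s w)⟩
  mul' := by
    intro a b c d h1 h2 s w
    simp only [FreeMonoid.toList_mul, stW_append]
    calc M.actW (M.stW (M.stW s a.toList) c.toList) w
        = M.actW (M.stW (M.stW s b.toList) c.toList) w :=
          M.actW_stW_congr (h1 s) c.toList w
      _ = M.actW (M.stW (M.stW s b.toList) d.toList) w := h2 _ w

/-- The automaton semigroup (monoid) `P_M = Q* / ~Q`. -/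
abbrev PM (M : Mealy Q A) : Type _ := M.conQ.Quotient

/-- The dual automaton semigroup (monoid) `D_M = A* / ~A`. -/
abbrev DM (M : Mealy Q A) : Type _ := M.conA.Quotient

/-- The monoid `D'_M = A* / ~D`. -/
abbrev DM' (M : Mealy Q A) : Type _ := M.conD.Quotient

/-- The class in `P_M` of a word of states. -/
def PMmk (M : Mealy Q A) (s : List Q) : M.PM := M.conQ.mk' (FreeMonoid.ofList s)

/-- The class in `D_M` of a word of letters. -/
def DMmk (M : Mealy Q A) (u : List A) : M.DM := M.conA.mk' (FreeMonoid.ofList u)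

/-- The class in `D'_M` of a word of letters. -/
def DM'mk (M : Mealy Q A) (u : List A) : M.DM' := M.conD.mk' (FreeMonoid.ofList u)

/-- `M` is self-invertible if `P_M` is a group. -/
def SelfInvertible (M : Mealy Q A) : Prop :=
  ∀ x : M.PM, ∃ y : M.PM, x * y = 1 ∧ y * x = 1

/-- The enriched automaton of an invertible automaton: states `Q ⊕ Q`, where `Sum.inl q` is `q`
and `Sum.inr q` is the formal inverse `q⁻¹`; `τ̃(q,a) = τ(q,a)` and
`τ̃(q⁻¹, q·a) = (a, (q@a)⁻¹)`. -/
noncomputable def enriched [Nonempty A] (M : Mealy Q A) : Mealy (Q ⊕ Q) A where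
  step := fun p b =>
    match p with
    | Sum.inl q => (M.o q b, Sum.inl (M.t q b))
    | Sum.inr q =>
        (Function.invFun (M.o q) b, Sum.inr (M.t q (Function.invFun (M.o q) b)))

/-- The monoid `Δ_M` presented by generators `Q ⊔ A` and relations `q a = (q·a)(q@a)`. -/
def deltaCon (M : Mealy Q A) : Con (FreeMonoid (Q ⊕ A)) :=
  conGen (fun w₁ w₂ => ∃ (q : Q) (a : A),
    w₁ = FreeMonoid.of (Sum.inl q) * FreeMonoid.of (Sum.inr a) ∧
    w₂ = FreeMonoid.of (Sum.inr (M.o q a)) * FreeMonoid.of (Sum.inl (M.t q a)))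

end Mealy

/-- Evaluation of a positive word in the letters `y` (for `true`) and `z` (for `false`). -/
def evalPair {S : Type*} [Monoid S] (y z : S) : List Bool → S
  | [] => 1
  | b :: l => (bif b then y else z) * evalPair y z l

/-- `y` and `z` freely generate a free subsemigroup of rank two: distinct nonempty
positive words in `y, z` represent distinct elements. -/
def IsFreePair {S : Type*} [Monoid S] (y z : S) : Prop :=
  ∀ l₁ l₂ : List Bool, l₁ ≠ [] → l₂ ≠ [] →
    evalPair y z l₁ = evalPair y z l₂ → l₁ = l₂

/-- `x` has infinite order: `{x, x², x³, …}` is infinite. -/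
def InfiniteOrder {S : Type*} [Monoid S] (x : S) : Prop :=
  (Set.range fun n : ℕ => x ^ (n + 1)).Infinite

/-- The length-`n` prefix of a sequence. -/
def seqTake {A : Type*} (ξ : ℕ → A) (n : ℕ) : List A := (List.range n).map ξ

/-- The `n`-th power `u^n` of a finite word. -/
def wpow {A : Type*} (u : List A) : ℕ → List A
  | 0 => []
  | n + 1 => u ++ wpow u n

/-- The eventually periodic sequence `u v v v ⋯`. -/
noncomputable def prePeriodic {A : Type*} [Nonempty A] (u v : List A) : ℕ → A :=
  fun n => if n < u.length then u.getD n (Classical.arbitrary A)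
    else v.getD ((n - u.length) % v.length) (Classical.arbitrary A)

/-- The periodic sequence `u^ω = u u u ⋯`. -/
noncomputable def periodic {A : Type*} [Nonempty A] (u : List A) : ℕ → A :=
  prePeriodic [] u

namespace Mealy

/-- The action of a word of states on a sequence: `s · ξ` is the sequence whose
length-`n` prefix is `s · (length-`n` prefix of `ξ`)`. -/
noncomputable def actSeq {Q A : Type*} [Nonempty A] (M : Mealy Q A)
    (s : List Q) (ξ : ℕ → A) : ℕ → A :=
  fun n => (M.actW s (seqTake ξ (n + 1))).getD n (Classical.arbitrary A)

/-- The language of all prefixes of the orbit of `a^ω` under `P_M`. -/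
def Lan {Q A : Type*} (M : Mealy Q A) (a : A) : Set (List A) :=
  {v | ∃ (k : ℕ) (s : List Q), v = M.actW s (List.replicate k a)}

/-- The degree of `v` in `Lan(a)`: the number of letters `b` with `v b ∈ Lan(a)`. -/
noncomputable def deg {Q A : Type*} (M : Mealy Q A) (a : A) (v : List A) : ℕ :=
  {b : A | v ++ [b] ∈ M.Lan a}.ncard

end Mealy

/-- A language is regular if it is recognized by a deterministic finite automaton. -/
def IsRegular {A : Type*} (L : Set (List A)) : Prop :=
  ∃ (σ : Type) (_ : Fintype σ) (dfa : DFA A σ), ∀ w : List A, w ∈ dfa.accepts ↔ w ∈ L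



namespace Mealy

variable {Q A : Type*}

/-! ### The action of letters on words of states -/

@[simp] theorem length_stW (M : Mealy Q A) (s : List Q) (w : List A) :
    (M.stW s w).length = s.length := by
  induction s with
  | nil => rfl
  | cons q s ih => simp [stW, ih]

@[simp] theorem length_actA (M : Mealy Q A) (q : Q) (w : List A) :
    (M.actA q w).length = w.length := by
  induction w generalizing q with
  | nil => rfl
  | cons a w ih => simp [actA, ih]

@[simp] theorem length_actW (M : Mealy Q A) (s : List Q) (w : List A) :
    (M.actW s w).length = w.length := by
  induction s with
  | nil => rfl
  | cons q s ih => simp [actW, ih]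

theorem stW_append_states (M : Mealy Q A) (s r : List Q) (w : List A) :
    M.stW (s ++ r) w = M.stW s (M.actW r w) ++ M.stW r w := by
  induction s with
  | nil => simp [stW]
  | cons q s ih => simp [stW, ih, actW_append_states]

@[simp] theorem stW_nil_right (M : Mealy Q A) (s : List Q) : M.stW s [] = s := by
  induction s with
  | nil => rfl
  | cons q s ih =>
    have : M.actW s [] = [] := List.length_eq_zero_iff.1 (by simp)
    simp [stW, ih, this, stA]

variable {M : Mealy Q A}

theorem stA_injective (hrev : M.Reversible) (w : List A) :
    Function.Injective (fun q => M.stA q w) := by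
  induction w with
  | nil => intro p q h; simpa [stA] using h
  | cons a w ih => intro p q h; exact (hrev a).1 (ih h)

theorem stW_injective (hrev : M.Reversible) (w : List A) :
    Function.Injective (fun s => M.stW s w) := by
  intro s s' h
  induction s generalizing s' with
  | nil =>
    cases s' with
    | nil => rfl
    | cons q s' => simp [stW] at h
  | cons q s ih =>
    cases s' with
    | nil => simp [stW] at h
    | cons q' s' =>
      simp only [stW, List.cons.injEq] at h
      obtain rfl := ih h.2
      rw [stA_injective hrev _ h.1]

/-- On the finite set of words of length `n`, the permutation induced by a word of letters has
finite order, so its inverse is induced by a word of letters as well. -/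
theorem exists_inverse [Finite Q] (hrev : M.Reversible) (n : ℕ) (g : List A) :
    ∃ g' : List A, ∀ s : List Q, s.length = n → M.stW (M.stW s g) g' = s := by
  have hfin : Finite {s : List Q // s.length = n} := List.finite_length_eq Q n
  let f : {s : List Q // s.length = n} → {s : List Q // s.length = n} :=
    fun s => ⟨M.stW s.1 g, by simp [s.2]⟩
  have hf : Function.Injective f := by
    intro s t h
    exact Subtype.ext (stW_injective hrev g (congrArg Subtype.val h))
  let e : Equiv.Perm {s : List Q // s.length = n} :=
    Equiv.ofBijective f (Finite.injective_iff_bijective.1 hf)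
  have hpow : ∀ (k : ℕ) (s : {s : List Q // s.length = n}),
      ∃ g' : List A, ∀ s : {s : List Q // s.length = n}, M.stW s.1 g' = ((e ^ k) s).1 := by
    intro k s
    induction k with
    | zero => exact ⟨[], fun s => by simp⟩
    | succ k ih =>
      obtain ⟨g', hg'⟩ := ih
      refine ⟨g ++ g', fun s => ?_⟩
      rw [stW_append, pow_succ, Equiv.Perm.mul_apply, ← hg']
      rfl
  rcases isEmpty_or_nonempty {s : List Q // s.length = n} with hE | ⟨⟨s0⟩⟩
  · exact ⟨[], fun s hs => (hE.false ⟨s, hs⟩).elim⟩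
  obtain ⟨g', hg'⟩ := hpow (orderOf e - 1) s0
  refine ⟨g', fun s hs => ?_⟩
  have h1 := hg' (e ⟨s, hs⟩)
  have h2 : (e ^ (orderOf e - 1)) (e ⟨s, hs⟩) = ⟨s, hs⟩ := by
    rw [← Equiv.Perm.mul_apply, ← pow_succ, Nat.sub_add_cancel (orderOf_pos e),
      pow_orderOf_eq_one, Equiv.Perm.one_apply]
  rw [h2] at h1
  exact h1

theorem stW_surjective [Finite Q] (hrev : M.Reversible) (g : List A) (s : List Q) :
    ∃ s', M.stW s' g = s := by
  obtain ⟨g', hg'⟩ := exists_inverse hrev s.length g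
  refine ⟨M.stW s g', stW_injective hrev g' ?_⟩
  exact hg' _ (by simp)

/-! ### The orbit language of a state -/

/-- The orbit language of `q`: all words `q ^ n @ u`. -/
def orb (M : Mealy Q A) (q : Q) : Set (List Q) :=
  {s | ∃ (n : ℕ) (u : List A), s = M.stW (List.replicate n q) u}

/-- Equality of the transformations of `A*` induced by two words of states. -/
def SameAct (M : Mealy Q A) (s t : List Q) : Prop := ∀ w, M.actW s w = M.actW t w

/-- Two words have the same left extensions inside the orbit language of `q`. -/
def SameFol (M : Mealy Q A) (q : Q) (s t : List Q) : Prop :=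
  ∀ z, z ++ s ∈ M.orb q ↔ z ++ t ∈ M.orb q

/-- The refined equivalence: equal length, equal action, and equal left extensions in the
orbit language. -/
def Eqv (M : Mealy Q A) (q : Q) (s t : List Q) : Prop :=
  s.length = t.length ∧ M.SameAct s t ∧ M.SameFol q s t

/-- The letters `p` such that some word `s' p r` is equivalent to `s r`. -/
def pivots (M : Mealy Q A) (q : Q) (s r : List Q) : Set Q :=
  {p | ∃ s', M.Eqv q (s' ++ p :: r) (s ++ r)}

theorem SameAct.append {s s' t t' : List Q} (h : M.SameAct s s') (h' : M.SameAct t t') :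
    M.SameAct (s ++ t) (s' ++ t') := by
  intro w
  rw [actW_append_states, actW_append_states, h' w, h]

theorem SameAct.symm {s t : List Q} (h : M.SameAct s t) : M.SameAct t s := fun w => (h w).symm

theorem SameAct.trans {s t r : List Q} (h : M.SameAct s t) (h' : M.SameAct t r) :
    M.SameAct s r := fun w => (h w).trans (h' w)

theorem SameAct.refl (s : List Q) : M.SameAct s s := fun _ => rfl

theorem SameAct.stW {s t : List Q} (h : M.SameAct s t) (g : List A) :
    M.SameAct (M.stW s g) (M.stW t g) := fun w => M.actW_stW_congr h g w

section orb

variable {q : Q}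

theorem replicate_mem_orb (n : ℕ) : List.replicate n q ∈ M.orb q := ⟨n, [], by simp⟩

theorem stW_mem_orb {s : List Q} (h : s ∈ M.orb q) (g : List A) : M.stW s g ∈ M.orb q := by
  obtain ⟨n, u, rfl⟩ := h
  exact ⟨n, u ++ g, by rw [stW_append]⟩

theorem mem_orb_eq {s : List Q} (h : s ∈ M.orb q) :
    ∃ u, s = M.stW (List.replicate s.length q) u := by
  obtain ⟨n, u, rfl⟩ := h
  exact ⟨u, by simp⟩

theorem mem_orb_append {s r : List Q} (h : s ++ r ∈ M.orb q) : s ∈ M.orb q ∧ r ∈ M.orb q := by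
  obtain ⟨u, hu⟩ := mem_orb_eq h
  rw [List.length_append, List.replicate_add, stW_append_states] at hu
  obtain ⟨h1, h2⟩ := List.append_inj hu (by simp)
  exact ⟨⟨_, _, h1⟩, ⟨_, _, h2⟩⟩

theorem exists_extend {s : List Q} (h : s ∈ M.orb q) (n : ℕ) :
    ∃ z, z.length = n ∧ z ++ s ∈ M.orb q := by
  obtain ⟨u, hu⟩ := mem_orb_eq h
  refine ⟨M.stW (List.replicate n q) (M.actW (List.replicate s.length q) u), by simp,
    n + s.length, u, ?_⟩
  rw [List.replicate_add, stW_append_states, ← hu]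

variable [Finite Q]

theorem mem_orb_of_stW (hrev : M.Reversible) {s : List Q} {g : List A}
    (h : M.stW s g ∈ M.orb q) : s ∈ M.orb q := by
  obtain ⟨g', hg'⟩ := exists_inverse hrev s.length g
  have := stW_mem_orb h g'
  rwa [hg' s rfl] at this

theorem orb_transitive (hrev : M.Reversible) {s t : List Q} (hs : s ∈ M.orb q)
    (ht : t ∈ M.orb q) (hl : s.length = t.length) : ∃ g, M.stW s g = t := by
  obtain ⟨u, hu⟩ := mem_orb_eq hs
  obtain ⟨v, hv⟩ := mem_orb_eq ht
  obtain ⟨g', hg'⟩ := exists_inverse hrev s.length u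
  refine ⟨g' ++ v, ?_⟩
  conv_lhs => rw [hu]
  rw [stW_append, hg' _ (by simp), hl, ← hv]

theorem Eqv.stW (hrev : M.Reversible) {s t : List Q} (h : M.Eqv q s t) (g : List A) :
    M.Eqv q (M.stW s g) (M.stW t g) := by
  obtain ⟨h1, h2, h3⟩ := h
  refine ⟨by simp [h1], h2.stW g, fun z => ?_⟩
  obtain ⟨z', rfl⟩ := stW_surjective hrev (M.actW s g) z
  rw [← stW_append_states]
  conv_rhs => rw [h2 g, ← stW_append_states]
  exact ⟨fun h => stW_mem_orb ((h3 z').1 (mem_orb_of_stW hrev h)) g,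
    fun h => stW_mem_orb ((h3 z').2 (mem_orb_of_stW hrev h)) g⟩

/-- Left extensions stabilise: past some length `N`, lengthening a word on the right does not
change the words that may follow it on the left. The number of one-letter left extensions depends
only on the length of the word, by transitivity, and does not increase with it. -/
theorem exists_stable (hrev : M.Reversible) (q : Q) :
    ∃ N, ∀ s r z : List Q, N ≤ s.length → s ++ r ∈ M.orb q → z ++ s ∈ M.orb q →
      z ++ (s ++ r) ∈ M.orb q := by
  classical
  let D : List Q → Set Q := fun s => {a | a :: s ∈ M.orb q}
  have hDle : ∀ s t : List Q, s ∈ M.orb q → t ∈ M.orb q → s.length = t.length →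
      (D s).ncard ≤ (D t).ncard := by
    intro s t hs ht hl
    obtain ⟨g, rfl⟩ := orb_transitive hrev hs ht hl
    refine Set.ncard_le_ncard_of_injOn (fun a => M.stA a (M.actW s g)) ?_
      (stA_injective hrev _).injOn
    intro a ha
    exact stW_mem_orb (s := a :: s) ha g
  have hDsub : ∀ s r : List Q, D (s ++ r) ⊆ D s := by
    intro s r a ha
    exact (mem_orb_append (s := a :: s) (r := r) ha).1
  let δ : ℕ → ℕ := fun n => (D (List.replicate n q)).ncard
  have hD : ∀ s : List Q, s ∈ M.orb q → (D s).ncard = δ s.length := fun s hs =>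
    le_antisymm (hDle _ _ hs (replicate_mem_orb _) (by simp))
      (hDle _ _ (replicate_mem_orb _) hs (by simp))
  obtain ⟨N, hN⟩ : ∃ N, ∀ n, δ N ≤ δ n := by
    obtain ⟨N, hN⟩ := Nat.sInf_mem (Set.range_nonempty δ)
    exact ⟨N, fun n => by rw [hN]; exact Nat.sInf_le ⟨n, rfl⟩⟩
  have hanti : ∀ m n, m ≤ n → δ n ≤ δ m := by
    intro m n h
    obtain ⟨k, rfl⟩ := Nat.exists_eq_add_of_le h
    refine Set.ncard_le_ncard ?_
    rw [List.replicate_add]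
    exact hDsub _ _
  refine ⟨N, fun s r z hs hsr => ?_⟩
  have hone : ∀ s r : List Q, N ≤ s.length → s ++ r ∈ M.orb q → D s ⊆ D (s ++ r) := by
    intro s r hs hsr
    refine (Set.eq_of_subset_of_ncard_le (hDsub s r) ?_).symm.subset
    rw [hD _ hsr, hD _ (mem_orb_append hsr).1]
    exact (hanti _ _ hs).trans (hN _)
  induction z with
  | nil => exact fun _ => hsr
  | cons a z ih =>
    intro h
    have h1 := ih (mem_orb_append (s := [a]) h).2
    have := hone (z ++ s) r (by simp; omega) (by simpa using h1) h
    simpa [D] using this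

end orb

end Mealy

namespace Mealy

variable {Q A : Type*} {M : Mealy Q A} {q : Q}

/-! ### Two finiteness criteria -/

/-- If equivalent words have different lengths, every long word of the orbit language can be
shortened, so the powers of `q` induce finitely many transformations. -/
theorem length_eq_of_sameAct [Finite Q] (hrev : M.Reversible)
    (hinf : (Set.range fun n : ℕ => M.actW (List.replicate n q)).Infinite)
    {s t : List Q} (hs : s ∈ M.orb q) (ht : t ∈ M.orb q) (h : M.SameAct s t)
    (hF : M.SameFol q s t) : s.length = t.length := by
  wlog hlt : t.length < s.length generalizing s t with H
  · rcases lt_trichotomy s.length t.length with h1 | h1 | h1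
    · exact (H ht hs h.symm (fun z => (hF z).symm) h1).symm
    · exact h1
    · exact absurd h1 hlt
  exfalso
  have key : ∀ n (x : List Q), x.length = n → x ∈ M.orb q →
      ∃ y, y.length < s.length ∧ y ∈ M.orb q ∧ M.SameAct x y := by
    intro n
    induction n using Nat.strong_induction_on with
    | _ n ih =>
      intro x hx hxo
      by_cases hn : n < s.length
      · exact ⟨x, by omega, hxo, SameAct.refl x⟩
      obtain ⟨z, hz, hzs⟩ := exists_extend hs (n - s.length)
      obtain ⟨g, rfl⟩ := orb_transitive hrev hzs hxo (by simp; omega)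
      obtain ⟨y, hy1, hy2, hy3⟩ := ih (n - s.length + t.length) (by omega)
        (M.stW (z ++ t) g) (by simp [hz]) (stW_mem_orb ((hF z).1 hzs) g)
      exact ⟨y, hy1, hy2, (((SameAct.refl z).append h).stW g).trans hy3⟩
  refine hinf (((List.finite_length_lt Q s.length).image M.actW).subset ?_)
  rintro _ ⟨n, rfl⟩
  obtain ⟨y, hy1, -, hy3⟩ := key n _ (by simp) (replicate_mem_orb (M := M) (q := q) n)
  exact ⟨y, hy1, funext fun w => (hy3 w).symm⟩

/-- If the transformations induced by the words of each large level of the orbit language can be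
coded by a fixed finite set, each of them is induced by a state of an automaton on that set. There
are finitely many such automata. -/
theorem finite_of_code [Finite A] {ι : Type*} [Finite ι] (m₀ : ℕ)
    (hc : ∀ m, m₀ ≤ m → ∃ c : List Q → ι, ∀ s t, s ∈ M.orb q → t ∈ M.orb q →
      s.length = m → t.length = m → c s = c t → M.SameAct s t) :
    (Set.range fun n : ℕ => M.actW (List.replicate n q)).Finite := by
  classical
  have hMfin : Finite (Mealy ι A) :=
    Finite.of_injective (fun N : Mealy ι A => N.step)
      (fun N N' h => by cases N; cases N'; simpa using h)
  refine Set.Finite.subset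
    (((Set.finite_lt_nat m₀).image fun n => M.actW (List.replicate n q)).union
      (Set.finite_range fun N : Mealy ι A × ι => N.1.actA N.2)) ?_
  rintro _ ⟨m, rfl⟩
  by_cases hm : m < m₀
  · exact Or.inl ⟨m, hm, rfl⟩
  right
  obtain ⟨c, hc⟩ := hc m (by omega)
  let P : ι → List Q → Prop := fun i t => t ∈ M.orb q ∧ t.length = m ∧ c t = i
  let N : Mealy ι A := ⟨fun i a =>
    if h : ∃ t, P i t then
      ((M.actW h.choose [a]).headD a, c (M.stW h.choose [a])) else (a, i)⟩
  have key : ∀ (u : List A) (t : List Q), t ∈ M.orb q → t.length = m →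
      M.actW t u = N.actA (c t) u := by
    intro u
    induction u with
    | nil =>
      intro t _ _
      exact List.length_eq_zero_iff.1 (by simp)
    | cons a u ih =>
      intro t ht hl
      have hex : ∃ t', P (c t) t' := ⟨t, ht, hl, rfl⟩
      obtain ⟨h1, h2, h3⟩ := hex.choose_spec
      have hsame : M.SameAct t hex.choose := hc _ _ ht h1 hl h2 h3.symm
      have hstep : N.step (c t) a =
          ((M.actW hex.choose [a]).headD a, c (M.stW hex.choose [a])) := dif_pos hex
      have ho : N.o (c t) a = (M.actW hex.choose [a]).headD a := by rw [o, hstep]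
      have htt : N.t (c t) a = c (M.stW hex.choose [a]) := by rw [Mealy.t, hstep]
      have e1 : M.actW t (a :: u) = M.actW t [a] ++ M.actW (M.stW t [a]) u :=
        M.actW_append t [a] u
      obtain ⟨b, hb⟩ := List.length_eq_one_iff.1
        (show (M.actW hex.choose [a]).length = 1 by simp)
      rw [e1, hsame.stW [a] u, hsame [a], ih _ (stW_mem_orb h1 [a]) (by simp [h2]), actA,
        ho, htt, hb]
      rfl
  exact ⟨⟨N, c (List.replicate m q)⟩,
    funext fun u => (key u _ (replicate_mem_orb m) (by simp)).symm⟩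

/-! ### Pivot sets -/

theorem Eqv.refl {s : List Q} : M.Eqv q s s := ⟨rfl, SameAct.refl s, fun _ => Iff.rfl⟩

theorem Eqv.append_left {s t : List Q} (h : M.Eqv q s t) (z : List Q) :
    M.Eqv q (z ++ s) (z ++ t) :=
  ⟨by simp [h.1], (SameAct.refl z).append h.2.1, fun y => by
    simpa using h.2.2 (y ++ z)⟩

theorem Eqv.mem {s t : List Q} (h : M.Eqv q s t) (ht : t ∈ M.orb q) : s ∈ M.orb q :=
  (h.2.2 []).2 ht

theorem Eqv.trans {s t r : List Q} (h : M.Eqv q s t) (h' : M.Eqv q t r) : M.Eqv q s r :=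
  ⟨h.1.trans h'.1, h.2.1.trans h'.2.1, fun z => (h.2.2 z).trans (h'.2.2 z)⟩

theorem Eqv.symm {s t : List Q} (h : M.Eqv q s t) : M.Eqv q t s :=
  ⟨h.1.symm, h.2.1.symm, fun z => (h.2.2 z).symm⟩

theorem pivots_congr {s s' r : List Q} (h : M.Eqv q (s ++ r) (s' ++ r)) :
    M.pivots q s r = M.pivots q s' r :=
  Set.ext fun _ => ⟨fun ⟨x, hx⟩ => ⟨x, hx.trans h⟩, fun ⟨x, hx⟩ => ⟨x, hx.trans h.symm⟩⟩

/-- The pivot sets are equivariant under the action of words of letters. -/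
theorem pivots_stW [Finite Q] (hrev : M.Reversible) {s r : List Q} {p : Q}
    (h : p ∈ M.pivots q s r) (g : List A) :
    M.stA p (M.actW r g) ∈ M.pivots q (M.stW s (M.actW r g)) (M.stW r g) := by
  obtain ⟨x, hx⟩ := h
  have h1 := hx.stW hrev g
  rw [stW_append_states, stW_append_states] at h1
  exact ⟨_, h1⟩

theorem ncard_pivots_le [Finite Q] (hrev : M.Reversible) {s r s' r' : List Q}
    (h : s ++ r ∈ M.orb q) (h' : s' ++ r' ∈ M.orb q) (hs : s.length = s'.length)
    (hr : r.length = r'.length) : (M.pivots q s r).ncard ≤ (M.pivots q s' r').ncard := by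
  obtain ⟨g, hg⟩ := orb_transitive hrev h h' (by simp [hs, hr])
  rw [stW_append_states] at hg
  obtain ⟨rfl, rfl⟩ := List.append_inj hg (by simp [hs])
  exact Set.ncard_le_ncard_of_injOn (fun p => M.stA p (M.actW r g))
    (fun p hp => pivots_stW hrev hp g) (stA_injective hrev _).injOn

theorem pivots_append_left (z s r : List Q) : M.pivots q s r ⊆ M.pivots q (z ++ s) r := by
  rintro p ⟨x, hx⟩
  exact ⟨z ++ x, by simpa using hx.append_left z⟩

/-- The property of `N` furnished by `exists_stable`. -/
def Stable (M : Mealy Q A) (q : Q) (N : ℕ) : Prop :=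
  ∀ s r z : List Q, N ≤ s.length → s ++ r ∈ M.orb q → z ++ s ∈ M.orb q →
    z ++ (s ++ r) ∈ M.orb q

theorem Stable.iff {N : ℕ} (hN : M.Stable q N) {s r : List Q} (hs : N ≤ s.length)
    (h : s ++ r ∈ M.orb q) (z : List Q) : z ++ (s ++ r) ∈ M.orb q ↔ z ++ s ∈ M.orb q :=
  ⟨fun h' => (mem_orb_append (s := z ++ s) (r := r) (by simpa using h')).1, hN s r z hs h⟩

theorem pivots_append_right {N : ℕ} (hN : M.Stable q N) {s r r' : List Q} (hr : N ≤ r.length)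
    (h : s ++ (r ++ r') ∈ M.orb q) : M.pivots q s r ⊆ M.pivots q s (r ++ r') := by
  have hrr := (mem_orb_append h).2
  rintro p ⟨x, h1, h2, h3⟩
  refine ⟨x, by simp at h1 ⊢; omega, ?_, fun z => ?_⟩
  · simpa using h2.append (SameAct.refl r')
  · have e1 := hN.iff hr hrr (z ++ (x ++ [p]))
    have e2 := hN.iff hr hrr (z ++ s)
    have e3 := h3 z
    simp only [List.append_assoc, List.cons_append, List.nil_append] at e1 e2 e3 ⊢
    rw [e1, e3, e2]

/-- Pivot sets are monotone and of bounded size, and their size depends only on the lengths of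
the two words, so they are eventually unchanged by enlarging either word on its outer side. -/
theorem exists_pivots_stable [Finite Q] (hrev : M.Reversible) {N : ℕ} (hN : M.Stable q N) :
    ∃ n₁ j₁, 1 ≤ n₁ ∧ N ≤ j₁ ∧ ∀ z s r r' : List Q, n₁ ≤ s.length → j₁ ≤ r.length →
      (z ++ s) ++ (r ++ r') ∈ M.orb q → M.pivots q (z ++ s) (r ++ r') = M.pivots q s r := by
  let f : ℕ → ℕ → ℕ := fun n j => (M.pivots q (List.replicate n q) (List.replicate j q)).ncard
  have hf : ∀ s r : List Q, s ++ r ∈ M.orb q → (M.pivots q s r).ncard = f s.length r.length := by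
    intro s r h
    have h' : List.replicate s.length q ++ List.replicate r.length q ∈ M.orb q := by
      rw [← List.replicate_add]; exact replicate_mem_orb _
    exact le_antisymm (ncard_pivots_le hrev h h' (by simp) (by simp))
      (ncard_pivots_le hrev h' h (by simp) (by simp))
  have hmono : ∀ n n' j j', n ≤ n' → N ≤ j → j ≤ j' → f n j ≤ f n' j' := by
    intro n n' j j' hn hj hj'
    obtain ⟨k, rfl⟩ := Nat.exists_eq_add_of_le' hn
    obtain ⟨l, rfl⟩ := Nat.exists_eq_add_of_le hj'
    refine Set.ncard_le_ncard ?_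
    rw [List.replicate_add, List.replicate_add]
    refine (pivots_append_left _ _ _).trans (pivots_append_right hN (by simpa using hj) ?_)
    rw [← List.replicate_add, ← List.replicate_add, ← List.replicate_add]
    exact replicate_mem_orb _
  obtain ⟨⟨n₁, j₁⟩, hmax⟩ : ∃ x : ℕ × ℕ, ∀ y : ℕ × ℕ,
      f (y.1 + 1) (N + y.2) ≤ f (x.1 + 1) (N + x.2) := by
    let S : Set ℕ := Set.range fun y : ℕ × ℕ => f (y.1 + 1) (N + y.2)
    have hb : BddAbove S := ⟨Nat.card Q, by
      rintro _ ⟨y, rfl⟩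
      exact Set.ncard_le_card _⟩
    obtain ⟨x, hx⟩ := Nat.sSup_mem (Set.range_nonempty _) hb
    exact ⟨x, fun y => (le_csSup hb ⟨y, rfl⟩).trans hx.ge⟩
  refine ⟨n₁ + 1, N + j₁, by omega, by omega, fun z s r r' hs hr h => ?_⟩
  have h0 : s ++ (r ++ r') ∈ M.orb q :=
    (mem_orb_append (s := z) (by simpa using h)).2
  have h1 : s ++ r ∈ M.orb q :=
    (mem_orb_append (s := s ++ r) (r := r') (by simpa using h0)).1
  refine (Set.eq_of_subset_of_ncard_le ((pivots_append_right hN (by omega) h0).trans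
    (pivots_append_left z s _)) ?_).symm
  rw [hf _ _ h, hf _ _ h1]
  have e1 := hmax ((z ++ s).length - 1, (r ++ r').length - N)
  have e2 := hmono (n₁ + 1) s.length (N + j₁) r.length hs (by omega) hr
  have e3 : (z ++ s).length - 1 + 1 = (z ++ s).length := by simp; omega
  have e4 : N + ((r ++ r').length - N) = (r ++ r').length := by simp; omega
  simp only [e3, e4] at e1
  exact e1.trans e2

end Mealy

namespace Mealy

variable {Q A : Type*} {M : Mealy Q A} {q : Q}

/-! ### Full pivot sets force finite order -/

/-- If the pivot set of some stable pair contains every possible next letter, then by transitivity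
so do all of them. A word of the orbit language ending (on the right) with a power of `q` can then
be rewritten, letter by letter, so that only boundedly many of its letters are not in that power;
hence the levels of the orbit language induce boundedly many transformations each. -/
theorem finite_of_full_pivots [Finite Q] [Finite A] (hrev : M.Reversible) {n₁ j₁ : ℕ}
    (hst : ∀ z s r r' : List Q, n₁ ≤ s.length → j₁ ≤ r.length →
      (z ++ s) ++ (r ++ r') ∈ M.orb q → M.pivots q (z ++ s) (r ++ r') = M.pivots q s r)
    {s₀ r₀ : List Q} (hs₀ : s₀.length = n₁) (hr₀ : r₀.length = j₁) (h₀ : s₀ ++ r₀ ∈ M.orb q)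
    (hfull : ∀ p, p :: r₀ ∈ M.orb q → p ∈ M.pivots q s₀ r₀) :
    (Set.range fun n : ℕ => M.actW (List.replicate n q)).Finite := by
  classical
  have hfull' : ∀ s r : List Q, s.length = n₁ → r.length = j₁ → s ++ r ∈ M.orb q →
      ∀ p, p :: r ∈ M.orb q → p ∈ M.pivots q s r := by
    intro s r hs hr h p hp
    obtain ⟨g, hg⟩ := orb_transitive hrev h₀ h (by simp [hs₀, hr₀, hs, hr])
    rw [stW_append_states] at hg
    obtain ⟨rfl, rfl⟩ := List.append_inj hg (by simp [hs₀, hs])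
    obtain ⟨p₀, rfl⟩ := (Finite.injective_iff_surjective.1
      (stA_injective hrev (M.actW r₀ g))) p
    exact pivots_stW hrev (hfull p₀ (mem_orb_of_stW hrev (g := g) hp)) g
  -- One rewriting step moves a letter `q` into the power of `q`.
  have hstep : ∀ (s : List Q) (j : ℕ), n₁ ≤ s.length → j₁ ≤ j →
      s ++ List.replicate j q ∈ M.orb q →
      ∃ x, M.Eqv q (x ++ List.replicate (j + 1) q) (s ++ List.replicate j q) := by
    intro s j hs hj h
    obtain ⟨l, rfl⟩ := Nat.exists_eq_add_of_le hj
    rw [List.replicate_add, ← List.take_append_drop (s.length - n₁) s] at h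
    have hd : (s.drop (s.length - n₁)).length = n₁ := by simp; omega
    have e := hst _ _ _ _ hd.ge (List.length_replicate (n := j₁) (a := q)).ge h
    have hm : s.drop (s.length - n₁) ++ List.replicate j₁ q ∈ M.orb q := by
      have h1 := h
      rw [List.append_assoc] at h1
      replace h1 := (mem_orb_append h1).2
      rw [← List.append_assoc] at h1
      exact (mem_orb_append h1).1
    have h2 := hfull' _ _ hd (by simp) hm q (replicate_mem_orb (j₁ + 1))
    rw [← e, List.take_append_drop, ← List.replicate_add] at h2
    exact h2
  have hiter : ∀ (k : ℕ) (s : List Q) (j : ℕ), s.length = n₁ + k → j₁ ≤ j →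
      s ++ List.replicate j q ∈ M.orb q →
      ∃ x, x.length = n₁ ∧ M.SameAct (s ++ List.replicate j q) (x ++ List.replicate (j + k) q) := by
    intro k
    induction k with
    | zero => intro s j hs hj h; exact ⟨s, hs, SameAct.refl _⟩
    | succ k ih =>
      intro s j hs hj h
      obtain ⟨x, hx⟩ := hstep s j (by omega) hj h
      have hl := hx.1
      simp only [List.length_append, List.length_replicate] at hl
      obtain ⟨y, hy1, hy2⟩ := ih x (j + 1) (by omega) (by omega) (hx.mem h)
      refine ⟨y, hy1, hx.2.1.symm.trans ?_⟩
      rwa [show j + 1 + k = j + (k + 1) by omega] at hy2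
  have hg : ∀ r : List Q, r ∈ M.orb q → ∃ g, M.stW r g = List.replicate r.length q :=
    fun r hr => orb_transitive hrev hr (replicate_mem_orb _) (by simp)
  choose! G hG using hg
  have hx : ∀ t : List Q, t ∈ M.orb q → n₁ + j₁ ≤ t.length → ∃ x, x.length = n₁ ∧
      M.SameAct (M.stW t (G (t.drop (t.length - j₁))))
        (x ++ List.replicate (t.length - n₁) q) := by
    intro t ht hl
    set r := t.drop (t.length - j₁) with hr
    have hrl : r.length = j₁ := by simp [hr]; omega
    have hro : r ∈ M.orb q :=
      (mem_orb_append (s := t.take (t.length - j₁)) (by rwa [List.take_append_drop])).2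
    have e : M.stW t (G r) = M.stW (t.take (t.length - j₁)) (M.actW r (G r)) ++
        List.replicate j₁ q := by
      conv_lhs => rw [← List.take_append_drop (t.length - j₁) t]
      rw [stW_append_states, ← hr, hG r hro, hrl]
    have hm := stW_mem_orb ht (G r)
    rw [e] at hm ⊢
    obtain ⟨x, hx1, hx2⟩ := hiter (t.length - n₁ - j₁) _ j₁ (by simp; omega) le_rfl hm
    rw [show j₁ + (t.length - n₁ - j₁) = t.length - n₁ by omega] at hx2
    exact ⟨x, hx1, hx2⟩
  choose! X hX1 hX2 using hx
  have hfin : Finite {s : List Q // s.length = n₁ ∨ s.length = j₁} :=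
    ((List.finite_length_eq Q n₁).union (List.finite_length_eq Q j₁))
  let mk : List Q → Option {s : List Q // s.length = n₁ ∨ s.length = j₁} :=
    fun s => if h : s.length = n₁ ∨ s.length = j₁ then some ⟨s, h⟩ else none
  have hmk : ∀ s t : List Q, (s.length = n₁ ∨ s.length = j₁) → mk s = mk t → s = t := by
    intro s t h e
    simp only [mk, dif_pos h] at e
    split_ifs at e
    simpa using e
  refine finite_of_code (n₁ + j₁) (fun m hm =>
    ⟨fun t => (mk (X t), mk (t.drop (t.length - j₁))), fun s t hs ht hsl htl hst' => ?_⟩)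
  simp only [Prod.mk.injEq] at hst'
  have eX := hmk _ _ (Or.inl (hX1 s hs (by omega))) hst'.1
  have er := hmk _ _ (Or.inr (by simp; omega)) hst'.2
  have h1 := hX2 s hs (by omega)
  have h2 := hX2 t ht (by omega)
  rw [eX, er, show s.length - n₁ = t.length - n₁ by omega] at h1
  have h3 := h1.trans h2.symm
  obtain ⟨g', hg'⟩ := exists_inverse hrev m (G (t.drop (t.length - j₁)))
  have h4 := h3.stW g'
  rwa [hg' s hsl, hg' t htl] at h4

/-! ### The free pair -/

/-- A recurrent word of length `j`: every word of length `j` reachable from it inside the orbit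
language can reach it back. -/
theorem exists_recurrent [Finite Q] {N j : ℕ} (hN : M.Stable q N) (hj : N ≤ j) :
    ∃ r : List Q, r.length = j ∧ r ∈ M.orb q ∧ ∀ w y : List Q, w.length = j →
      w ++ y ++ r ∈ M.orb q → ∃ y', r ++ y' ++ w ∈ M.orb q := by
  let S : List Q → Set (List Q) := fun r => {w | w.length = j ∧ ∃ y, w ++ y ++ r ∈ M.orb q}
  have hfin : ∀ r, (S r).Finite := fun r =>
    (List.finite_length_eq Q j).subset fun w hw => hw.1
  have hsub : ∀ r, ∀ w ∈ S r, S w ⊆ S r := by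
    rintro r w ⟨hw, y, hy⟩ v ⟨hv, y', hy'⟩
    refine ⟨hv, y' ++ w ++ y, ?_⟩
    have := hN w (y ++ r) (v ++ y') (by omega) (by simpa using hy) hy'
    simpa using this
  let K : Set ℕ := (fun r => (S r).ncard) '' {r | r.length = j ∧ r ∈ M.orb q}
  have hK : K.Nonempty := ⟨_, List.replicate j q, ⟨by simp, replicate_mem_orb j⟩, rfl⟩
  obtain ⟨r, ⟨hr, hro⟩, hmin⟩ := Nat.sInf_mem hK
  have heq : ∀ w ∈ S r, S w = S r := by
    intro w hw
    refine Set.eq_of_subset_of_ncard_le (hsub r w hw) ?_ (hfin r)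
    refine hmin.le.trans (Nat.sInf_le ⟨w, ⟨hw.1, ?_⟩, rfl⟩)
    obtain ⟨-, y, hy⟩ := hw
    rw [List.append_assoc] at hy
    exact (mem_orb_append hy).1
  obtain ⟨w, hw, hwr⟩ := exists_extend hro j
  have hwS : w ∈ S r := ⟨hw, [], by simpa using hwr⟩
  refine ⟨w, hw, (mem_orb_append hwr).1, fun v y hv hvy => ?_⟩
  have hvS : v ∈ S w := ⟨hv, y, hvy⟩
  rw [heq w hwS] at hvS
  have : w ∈ S v := by rw [heq v hvS]; exact hwS
  exact this.2

/-- Concatenation of copies of two words prescribed by a list of Booleans. -/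
def ev (U V : List Q) (l : List Bool) : List Q := l.flatMap fun b => bif b then U else V

theorem suffix_or_split (l₁ l₂ : List Bool) : l₁ = l₂ ∨ (∃ k, k ≠ [] ∧ l₁ = k ++ l₂) ∨
    (∃ k, k ≠ [] ∧ l₂ = k ++ l₁) ∨
    (∃ k₁ k₂ c, l₁ = k₁ ++ true :: c ∧ l₂ = k₂ ++ false :: c) ∨
    (∃ k₁ k₂ c, l₁ = k₁ ++ false :: c ∧ l₂ = k₂ ++ true :: c) := by
  induction l₁ using List.reverseRecOn generalizing l₂ with
  | nil =>
    by_cases h : l₂ = []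
    · exact Or.inl h.symm
    · exact Or.inr (Or.inr (Or.inl ⟨l₂, h, by simp⟩))
  | append_singleton l₁ a ih =>
    rcases List.eq_nil_or_concat l₂ with rfl | ⟨l₂, b, rfl⟩
    · exact Or.inr (Or.inl ⟨l₁ ++ [a], by simp, by simp⟩)
    by_cases hab : a = b
    · subst hab
      rcases ih l₂ with h | ⟨k, hk, h⟩ | ⟨k, hk, h⟩ | ⟨k₁, k₂, c, h, h'⟩ | ⟨k₁, k₂, c, h, h'⟩
      · exact Or.inl (by simp [h])
      · exact Or.inr (Or.inl ⟨k, hk, by simp [h]⟩)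
      · exact Or.inr (Or.inr (Or.inl ⟨k, hk, by simp [h]⟩))
      · exact Or.inr (Or.inr (Or.inr (Or.inl ⟨k₁, k₂, c ++ [a], by simp [h], by simp [h']⟩)))
      · exact Or.inr (Or.inr (Or.inr (Or.inr ⟨k₁, k₂, c ++ [a], by simp [h], by simp [h']⟩)))
    · cases a <;> cases b <;> simp at hab
      · exact Or.inr (Or.inr (Or.inr (Or.inr ⟨l₁, l₂, [], by simp, by simp⟩)))
      · exact Or.inr (Or.inr (Or.inr (Or.inl ⟨l₁, l₂, [], by simp, by simp⟩)))

/-- A state of infinite order yields two words of states that freely generate a free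
subsemigroup. The two words begin with a recurrent word `r`, can be followed by `r` on the right
inside the orbit language, and have distinct pivot sets relative to `r`. -/
theorem exists_free_words [Finite Q] [Finite A] (hrev : M.Reversible)
    (hinf : (Set.range fun n : ℕ => M.actW (List.replicate n q)).Infinite) :
    ∃ U V : List Q, ∀ l₁ l₂ : List Bool, M.SameAct (ev U V l₁) (ev U V l₂) → l₁ = l₂ := by
  obtain ⟨N, hN⟩ := exists_stable hrev q
  change M.Stable q N at hN
  obtain ⟨n₁, j₁, hn₁, hj₁, hst⟩ := exists_pivots_stable hrev hN
  obtain ⟨r, hr, hro, hrec⟩ := exists_recurrent hN hj₁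
  obtain ⟨u, hu, hur⟩ := exists_extend hro n₁
  obtain ⟨p, hpr, hpu⟩ : ∃ p, p :: r ∈ M.orb q ∧ p ∉ M.pivots q u r := by
    by_contra! hcon
    exact hinf (finite_of_full_pivots hrev hst hu hr hur hcon)
  obtain ⟨v, hv, hvr⟩ := exists_extend hpr n₁
  replace hvr : (v ++ [p]) ++ r ∈ M.orb q := by simpa using hvr
  have hpv : p ∈ M.pivots q (v ++ [p]) r := ⟨v, by simpa using Eqv.refl⟩
  have hret : ∀ u, u ++ r ∈ M.orb q → ∃ x, (r ++ x ++ u) ++ r ∈ M.orb q := by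
    intro u hu
    obtain ⟨w, hw, hwu⟩ := exists_extend hu j₁
    obtain ⟨y, hy⟩ := hrec w u hw (by simpa using hwu)
    exact ⟨y ++ w, by simpa using hN w (u ++ r) (r ++ y) (by omega) hwu hy⟩
  obtain ⟨x₁, hU⟩ := hret _ hur
  obtain ⟨x₂, hV⟩ := hret _ hvr
  set U := r ++ x₁ ++ u with hUdef
  set V := r ++ x₂ ++ (v ++ [p]) with hVdef
  refine ⟨U, V, ?_⟩
  have hhead : ∀ l, ∃ x, ev U V l ++ r = r ++ x := by
    intro l
    cases l with
    | nil => exact ⟨[], by simp [ev]⟩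
    | cons b l =>
      cases b
      · exact ⟨x₂ ++ (v ++ [p]) ++ (ev U V l ++ r), by simp [ev, hVdef]⟩
      · exact ⟨x₁ ++ u ++ (ev U V l ++ r), by simp [ev, hUdef]⟩
  have hext : ∀ l z, ev U V l ++ r ∈ M.orb q →
      (z ++ (ev U V l ++ r) ∈ M.orb q ↔ z ++ r ∈ M.orb q) := by
    intro l z h
    obtain ⟨x, hx⟩ := hhead l
    rw [hx] at h ⊢
    exact hN.iff (by omega) h z
  have hmem : ∀ l, ev U V l ++ r ∈ M.orb q := by
    intro l
    induction l with
    | nil => simpa [ev] using hro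
    | cons b l ih =>
      have e : ev U V (b :: l) ++ r = (bif b then U else V) ++ (ev U V l ++ r) := by simp [ev]
      rw [e, hext l _ ih]
      cases b
      · exact hV
      · exact hU
  have hfol : ∀ l l', M.SameFol q (ev U V l ++ r) (ev U V l' ++ r) := fun l l' z => by
    rw [hext l z (hmem l), hext l' z (hmem l')]
  have hlen : ∀ l l', M.SameAct (ev U V l) (ev U V l') →
      (ev U V l ++ r).length = (ev U V l' ++ r).length := fun l l' h =>
    length_eq_of_sameAct hrev hinf (hmem l) (hmem l') (h.append (SameAct.refl r)) (hfol l l')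
  have happ : ∀ l l', ev U V (l ++ l') = ev U V l ++ ev U V l' := by simp [ev]
  have hpos : ∀ k, k ≠ [] → 0 < (ev U V k).length := by
    intro k hk
    obtain ⟨b, k, rfl⟩ := List.exists_cons_of_ne_nil hk
    cases b
    · simp [ev, hVdef]
    · simp [ev, hUdef]; omega
  have hsuff : ∀ k l, k ≠ [] → ¬ M.SameAct (ev U V (k ++ l)) (ev U V l) := by
    intro k l hk h
    have h1 := hlen _ _ h
    have h2 := hpos k hk
    rw [happ] at h1
    simp only [List.length_append] at h1
    omega
  have hsplit : ∀ k₁ k₂ c, ¬ M.SameAct (ev U V (k₁ ++ true :: c))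
      (ev U V (k₂ ++ false :: c)) := by
    intro k₁ k₂ c h
    obtain ⟨x, hx⟩ := hhead c
    have e1 : ev U V (k₁ ++ true :: c) ++ r = (ev U V k₁ ++ r ++ x₁ ++ u) ++ (r ++ x) := by
      rw [← hx]; simp [ev, hUdef]
    have e2 : ev U V (k₂ ++ false :: c) ++ r =
        (ev U V k₂ ++ r ++ x₂ ++ (v ++ [p])) ++ (r ++ x) := by
      rw [← hx]; simp [ev, hVdef]
    have heq : M.Eqv q (ev U V (k₁ ++ true :: c) ++ r) (ev U V (k₂ ++ false :: c) ++ r) :=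
      ⟨hlen _ _ h, h.append (SameAct.refl r), hfol _ _⟩
    have m1 := hmem (k₁ ++ true :: c)
    have m2 := hmem (k₂ ++ false :: c)
    rw [e1] at m1
    rw [e2] at m2
    rw [e1, e2] at heq
    have := pivots_congr heq
    rw [hst _ u r x hu.ge hr.ge m1, hst _ (v ++ [p]) r x (by simp; omega) hr.ge m2] at this
    exact hpu (this ▸ hpv)
  intro l₁ l₂ h
  rcases suffix_or_split l₁ l₂ with h' | ⟨k, hk, rfl⟩ | ⟨k, hk, rfl⟩ |
    ⟨k₁, k₂, c, rfl, rfl⟩ | ⟨k₁, k₂, c, rfl, rfl⟩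
  · exact h'
  · exact (hsuff _ _ hk h).elim
  · exact (hsuff _ _ hk h.symm).elim
  · exact (hsplit _ _ _ h).elim
  · exact (hsplit _ _ _ h.symm).elim

end Mealy

namespace Mealy

variable {Q A : Type*}

/-! ### Powers of an automaton -/

/-- The automaton whose states are the words of length `L` in the states of `M`. -/
def pow (M : Mealy Q A) (L : ℕ) : Mealy {s : List Q // s.length = L} A where
  step s a := ((M.actW s.1 [a]).headD a, ⟨M.stW s.1 [a], by simp [s.2]⟩)

theorem pow_reversible [Finite Q] {M : Mealy Q A} (hrev : M.Reversible) (L : ℕ) :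
    (M.pow L).Reversible := by
  have hfin : Finite {s : List Q // s.length = L} := List.finite_length_eq Q L
  intro a
  refine Finite.injective_iff_bijective.1 fun s t h => ?_
  exact Subtype.ext (stW_injective hrev [a] (congrArg Subtype.val h))

theorem pow_actA (M : Mealy Q A) {L : ℕ} (s : {s : List Q // s.length = L}) (w : List A) :
    (M.pow L).actA s w = M.actW s.1 w := by
  induction w generalizing s with
  | nil => exact (List.length_eq_zero_iff.1 (by simp)).symm
  | cons a w ih =>
    obtain ⟨b, hb⟩ := List.length_eq_one_iff.1 (show (M.actW s.1 [a]).length = 1 by simp)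
    have e : M.actW s.1 (a :: w) = M.actW s.1 [a] ++ M.actW (M.stW s.1 [a]) w :=
      M.actW_append s.1 [a] w
    rw [actA, ih, e, o, t, pow]
    simp [hb]

theorem pow_actW (M : Mealy Q A) {L : ℕ} (s : List {s : List Q // s.length = L}) (w : List A) :
    (M.pow L).actW s w = M.actW (s.flatMap Subtype.val) w := by
  induction s with
  | nil => rfl
  | cons p s ih => rw [actW, ih, pow_actA, List.flatMap_cons, actW_append_states]

theorem PMmk_eq_iff (M : Mealy Q A) (s t : List Q) : M.PMmk s = M.PMmk t ↔ M.SameAct s t :=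
  Con.eq M.conQ

theorem PMmk_append (M : Mealy Q A) (s t : List Q) :
    M.PMmk (s ++ t) = M.PMmk s * M.PMmk t := rfl

theorem PMmk_pow (M : Mealy Q A) (s : List Q) (n : ℕ) :
    M.PMmk s ^ n = M.PMmk ((List.replicate n s).flatMap id) := by
  induction n with
  | zero => rfl
  | succ n ih => rw [pow_succ', ih, ← PMmk_append, List.replicate_succ, List.flatMap_cons]; rfl

theorem evalPair_PMmk (M : Mealy Q A) {L : ℕ} (U V : List {s : List Q // s.length = L})
    (l : List Bool) :
    evalPair (M.PMmk (U.flatMap Subtype.val)) (M.PMmk (V.flatMap Subtype.val)) l =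
      M.PMmk ((ev U V l).flatMap Subtype.val) := by
  induction l with
  | nil => rfl
  | cons b l ih =>
    have e : ev U V (b :: l) = (bif b then U else V) ++ ev U V l := by simp [ev]
    rw [evalPair, ih, e, List.flatMap_append, PMmk_append]
    cases b <;> rfl

end Mealy

/-- For a reversible Mealy automaton `M`, the automaton semigroup `P_M`
contains a free subsemigroup of rank two iff it contains an element of infinite order. -/
theorem stmt0 {Q A : Type*} [Fintype Q] [Nonempty Q] [Fintype A] [Nonempty A]
    (M : Mealy Q A) (hrev : M.Reversible) :
    (∃ y z : M.PM, IsFreePair y z) ↔ (∃ x : M.PM, InfiniteOrder x) := by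
  constructor
  · rintro ⟨y, z, h⟩
    refine ⟨y, Set.infinite_range_of_injective fun m n hmn => ?_⟩
    have hpow : ∀ n, evalPair y z (List.replicate n true) = y ^ n := by
      intro n
      induction n with
      | zero => rw [pow_zero]; rfl
      | succ n ih => rw [List.replicate_succ, evalPair, ih, pow_succ']; rfl
    have := h (List.replicate (m + 1) true) (List.replicate (n + 1) true) (by simp) (by simp)
      (by rw [hpow, hpow]; exact hmn)
    simpa using congrArg List.length this
  · rintro ⟨x, hx⟩
    obtain ⟨w, rfl⟩ : ∃ w, x = M.PMmk w := by
      obtain ⟨w, hw⟩ := Con.mk'_surjective (c := M.conQ) x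
      exact ⟨w.toList, hw.symm⟩
    let q : {s : List Q // s.length = w.length} := ⟨w, rfl⟩
    have hfin : Finite {s : List Q // s.length = w.length} := List.finite_length_eq Q w.length
    have hflat : ∀ n, (List.replicate n q).flatMap Subtype.val =
        (List.replicate n w).flatMap id := by
      intro n
      induction n with
      | zero => rfl
      | succ n ih => rw [List.replicate_succ, List.replicate_succ, List.flatMap_cons, ih]; rfl
    have hinf : (Set.range fun n : ℕ => (M.pow w.length).actW (List.replicate n q)).Infinite := by
      intro hF
      -- The power of `x` is recovered from the transformation it induces.
      choose! φ hφ using fun (f : List A → List A)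
        (hf : ∃ s, f = M.actW s) => hf
      refine hx ((hF.image fun f => M.PMmk (φ f)).subset ?_)
      rintro _ ⟨n, rfl⟩
      refine ⟨_, ⟨n + 1, rfl⟩, ?_⟩
      have e : (M.pow w.length).actW (List.replicate (n + 1) q) =
          M.actW ((List.replicate (n + 1) w).flatMap id) :=
        funext fun u => by rw [Mealy.pow_actW, hflat]
      simp only [Mealy.PMmk_pow, Mealy.PMmk_eq_iff]
      rw [e]
      exact fun u => (congrFun (hφ _ ⟨_, rfl⟩) u).symm
    obtain ⟨U, V, hUV⟩ := Mealy.exists_free_words (Mealy.pow_reversible hrev _) hinf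
    refine ⟨M.PMmk (U.flatMap Subtype.val), M.PMmk (V.flatMap Subtype.val),
      fun l₁ l₂ _ _ h => hUV l₁ l₂ fun u => ?_⟩
    rw [Mealy.evalPair_PMmk, Mealy.evalPair_PMmk, Mealy.PMmk_eq_iff] at h
    rw [Mealy.pow_actW, Mealy.pow_actW, h u]

end AutGrp
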